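/- For every real J with 0 < J < 1, the hypergeometric Wronskian identity F(J)·F*(J) + 3J·(F(J)·(F*)′(J) − F′(J)·F*(J)) = (1−J)^{−1/2} holds, where F(J) = ₂F₁(1/12, 1/12; 2/3; J), F*(J) = ₂F₁(5/12, 5/12; 4/3; J), and ′ denotes differentiation with respect to J. -/

import Mathlib

noncomputable section

/-- Rising factorial (Pochhammer symbol) `(a)_n = a(a+1)⋯(a+n-1)`. -/
def poch (a : ℝ) (n : ℕ) : ℝ := ∏ i ∈ Finset.range n, (a + (i : ℝ))

/-- The Gauss hypergeometric series `F(a,b;c;x) = Σ_{k≥0} (a)_k (b)_k / ((c)_k k!) xᵏ`. -/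
def hyp (a b c x : ℝ) : ℝ :=
  ∑' k : ℕ, poch a k * poch b k / (poch c k * (Nat.factorial k : ℝ)) * x ^ k

/-!
For `c` not an integer, the hypergeometric equation with parameters `a, b, c` has at `0` the two
Frobenius solutions `F(a, b; c; x)` and `x ^ (1 - c) * F(a - c + 1, b - c + 1; 2 - c; x)`.
By Abel's identity their Wronskian is a constant multiple of `x ^ (-c) * (1 - x) ^ (c - a - b - 1)`.
Multiplied by `x ^ c`, the Wronskian is regular at `0`, and its value `1 - c` there gives the
constant. The theorem is the case `a = b = 1/12`, `c = 2/3`.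
-/

open FormalMultilinearSeries

section PowerSeries

variable {𝕜 : Type*} [NontriviallyNormedField 𝕜] {f : 𝕜 → 𝕜} {u : ℕ → 𝕜} {x : 𝕜} {r : ENNReal}

theorem hasSum_of_hasFPowerSeriesOnBall_ofScalars
    (hf : HasFPowerSeriesOnBall f (ofScalars 𝕜 u) 0 r) (hx : x ∈ Metric.eball 0 r) :
    HasSum (fun n ↦ u n * x ^ n) (f x) := by
  simpa [mul_comm] using hf.hasSum hx

variable [CompleteSpace 𝕜]

theorem hasFPowerSeriesOnBall_deriv_ofScalars
    (hf : HasFPowerSeriesOnBall f (ofScalars 𝕜 u) x r) :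
    HasFPowerSeriesOnBall (deriv f) (ofScalars 𝕜 fun n ↦ (n + 1) * u (n + 1)) x r := by
  convert! (ContinuousLinearMap.apply 𝕜 𝕜 (1 : 𝕜)).comp_hasFPowerSeriesOnBall hf.fderiv using 1
  ext n
  simp

theorem hasSum_mul_deriv (hf : HasFPowerSeriesOnBall f (ofScalars 𝕜 u) 0 r)
    (hx : x ∈ Metric.eball 0 r) :
    HasSum (fun n : ℕ ↦ n * u n * x ^ n) (x * deriv f x) := by
  have h := hasSum_of_hasFPowerSeriesOnBall_ofScalars (hasFPowerSeriesOnBall_deriv_ofScalars hf) hx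
  rw [← hasSum_nat_add_iff' 1]
  convert! h.mul_left x using 1
  · ext n
    push_cast
    ring
  · simp

theorem hasSum_sq_mul_deriv_deriv (hf : HasFPowerSeriesOnBall f (ofScalars 𝕜 u) 0 r)
    (hx : x ∈ Metric.eball 0 r) :
    HasSum (fun n : ℕ ↦ n * (n - 1) * u n * x ^ n) (x ^ 2 * deriv (deriv f) x) := by
  have h := hasSum_mul_deriv (hasFPowerSeriesOnBall_deriv_ofScalars hf) hx
  rw [← hasSum_nat_add_iff' 1]
  convert! h.mul_left x using 1
  · ext n
    push_cast
    ring
  · simp [sq, mul_assoc]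

end PowerSeries

section HypergeometricEquation

variable {𝕜 : Type*} [NontriviallyNormedField 𝕜]

/-- The function `f` is twice differentiable at `x` and satisfies there Gauss's hypergeometric
equation with parameters `a, b, c`. -/
structure IsHypergeometricSolutionAt (a b c : 𝕜) (f : 𝕜 → 𝕜) (x : 𝕜) : Prop where
  differentiableAt : DifferentiableAt 𝕜 f x
  differentiableAt_deriv : DifferentiableAt 𝕜 (deriv f) x
  equation : x * (1 - x) * deriv (deriv f) x + (c - (a + b + 1) * x) * deriv f x = a * b * f x

/-- The Wronskian of `f` and `x ^ (1 - c) * g`, multiplied by `x ^ c` so that it is regular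
at `0`. -/
def frobeniusWronskian (c : 𝕜) (f g : 𝕜 → 𝕜) (x : 𝕜) : 𝕜 :=
  (1 - c) * (f x * g x) + x * (f x * deriv g x - deriv f x * g x)

theorem frobeniusWronskian_zero (c : 𝕜) (f g : 𝕜 → 𝕜) :
    frobeniusWronskian c f g 0 = (1 - c) * (f 0 * g 0) := by
  simp [frobeniusWronskian]

theorem hasDerivAt_frobeniusWronskian {a b c x : 𝕜} {f g : 𝕜 → 𝕜} (hx : x ≠ 1)
    (hf : IsHypergeometricSolutionAt a b c f x)
    (hg : IsHypergeometricSolutionAt (a - c + 1) (b - c + 1) (2 - c) g x) :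
    HasDerivAt (frobeniusWronskian c f g)
      ((a + b + 1 - c) / (1 - x) * frobeniusWronskian c f g x) x := by
  have hf₁ := hf.differentiableAt.hasDerivAt
  have hf₂ := hf.differentiableAt_deriv.hasDerivAt
  have hg₁ := hg.differentiableAt.hasDerivAt
  have hg₂ := hg.differentiableAt_deriv.hasDerivAt
  have hW := ((hf₁.mul hg₁).const_mul (1 - c)).add
    ((hasDerivAt_id' x).mul ((hf₁.mul hg₂).sub (hf₂.mul hg₁)))
  refine HasDerivAt.congr_deriv hW ?_
  have hx' : 1 - x ≠ 0 := sub_ne_zero.mpr hx.symm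
  rw [div_mul_eq_mul_div, eq_div_iff hx', frobeniusWronskian]
  simp only [Pi.mul_apply, Pi.sub_apply]
  linear_combination f x * hg.equation - g x * hf.equation

end HypergeometricEquation

section OrdinaryHypergeometric

theorem ordinaryHypergeometricCoefficient_succ {𝕜 : Type*} [Field 𝕜] [CharZero 𝕜] (a b : 𝕜)
    {c : 𝕜} {n : ℕ} (hc : c + n ≠ 0) :
    (c + n) * ((n + 1) * ordinaryHypergeometricCoefficient a b c (n + 1)) =
      (a + n) * (b + n) * ordinaryHypergeometricCoefficient a b c n := by
  have hn : (n + 1 : 𝕜) ≠ 0 := n.cast_add_one_ne_zero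
  simp only [ordinaryHypergeometricCoefficient, ascPochhammer_succ_eval, Nat.factorial_succ,
    Nat.cast_mul, Nat.cast_succ, mul_inv]
  field_simp

variable {𝕜 : Type*} [RCLike 𝕜] (a b : 𝕜) {c x : 𝕜}

theorem one_le_radius_ordinaryHypergeometricSeries (c : 𝕜) :
    1 ≤ (ordinaryHypergeometricSeries 𝕜 a b c).radius := by
  by_cases h : ∀ n : ℕ, ↑n ≠ -a ∧ ↑n ≠ -b ∧ ↑n ≠ -c
  · exact (ordinaryHypergeometricSeries_radius_eq_one 𝕜 a b c h).ge
  · push Not at h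
    obtain ⟨n, hn⟩ := h
    have hrad : (ordinaryHypergeometricSeries 𝕜 a b c).radius = ⊤ :=
      radius_eq_top_of_forall_image_add_eq_zero _ (1 + n) fun k ↦
        ordinaryHypergeometricSeries_eq_zero_of_neg_nat (k := n) a b c (by tauto) (by lia)
    simp [hrad]

theorem hasFPowerSeriesOnBall_ordinaryHypergeometric (c : 𝕜) :
    HasFPowerSeriesOnBall (₂F₁ a b c : 𝕜 → 𝕜) (ordinaryHypergeometricSeries 𝕜 a b c) 0 1 :=
  have h := one_le_radius_ordinaryHypergeometricSeries a b c
  ((ordinaryHypergeometricSeries 𝕜 a b c).hasFPowerSeriesOnBall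
    (one_pos.trans_le h)).mono one_pos h

theorem isHypergeometricSolutionAt_ordinaryHypergeometric (hc : ∀ n : ℕ, c ≠ -n) (hx : ‖x‖ < 1) :
    IsHypergeometricSolutionAt a b c (₂F₁ a b c) x := by
  have hF := hasFPowerSeriesOnBall_ordinaryHypergeometric a b c
  have hF' := hasFPowerSeriesOnBall_deriv_ofScalars hF
  have hx' : x ∈ Metric.eball (0 : 𝕜) 1 := by simpa [← ofReal_norm] using hx
  refine ⟨(hF.analyticOnNhd x hx').differentiableAt, (hF'.analyticOnNhd x hx').differentiableAt, ?_⟩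
  have hleft := (hasSum_mul_deriv hF' hx').add
    ((hasSum_of_hasFPowerSeriesOnBall_ofScalars hF' hx').mul_left c)
  have hright := ((hasSum_sq_mul_deriv_deriv hF hx').add
    ((hasSum_mul_deriv hF hx').mul_left (a + b + 1))).add
    ((hasSum_of_hasFPowerSeriesOnBall_ofScalars hF hx').mul_left (a * b))
  have hsum := hleft.unique <| hright.congr_fun fun n ↦ by
    have hcn : c + n ≠ 0 := by simpa [add_eq_zero_iff_eq_neg] using hc n
    linear_combination x ^ n * ordinaryHypergeometricCoefficient_succ a b hcn
  linear_combination hsum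

end OrdinaryHypergeometric

theorem mul_one_sub_rpow_eq_of_hasDerivAt {s : Set ℝ} (hs : IsOpen s) (hs' : IsPreconnected s)
    (hs₁ : s ⊆ Set.Iio 1) {w : ℝ → ℝ} {p : ℝ}
    (hw : ∀ x ∈ s, HasDerivAt w (p / (1 - x) * w x) x) {x y : ℝ} (hx : x ∈ s) (hy : y ∈ s) :
    w x * (1 - x) ^ p = w y * (1 - y) ^ p := by
  have hderiv : ∀ z ∈ s, HasDerivAt (fun z ↦ w z * (1 - z) ^ p) 0 z := fun z hz ↦ by
    have hz₁ : 1 - z ≠ 0 := (sub_pos.mpr (hs₁ hz)).ne'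
    convert! (hw z hz).mul (((hasDerivAt_id' z).const_sub 1).rpow_const (p := p) (.inl hz₁)) using 1
    rw [Real.rpow_sub_one hz₁]
    ring
  exact hs.is_const_of_deriv_eq_zero hs'
    (fun z hz ↦ (hderiv z hz).differentiableAt.differentiableWithinAt)
    (fun z hz ↦ (hderiv z hz).deriv) hx hy

theorem poch_eq_eval_ascPochhammer (a : ℝ) (n : ℕ) : poch a n = (ascPochhammer ℝ n).eval a := by
  induction n with
  | zero => simp [poch]
  | succ n ih => rw [ascPochhammer_succ_eval, ← ih, poch, poch, Finset.prod_range_succ]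

theorem hyp_eq_ordinaryHypergeometric (a b c : ℝ) : hyp a b c = ₂F₁ a b c := by
  ext x
  simp only [hyp, ordinaryHypergeometric_eq_tsum, poch_eq_eval_ascPochhammer, smul_eq_mul]
  congr! 3 with n
  rw [div_eq_mul_inv, mul_inv]
  ring

theorem hypergeometric_wronskian_general (a b : ℝ) {c x : ℝ} (hc : ∀ n : ℕ, c ≠ -n)
    (hc' : ∀ n : ℕ, 2 - c ≠ -n) (hx : |x| < 1) :
    (1 - c) * (hyp a b c x * hyp (a - c + 1) (b - c + 1) (2 - c) x) +
      x * (hyp a b c x * deriv (hyp (a - c + 1) (b - c + 1) (2 - c)) x -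
        deriv (hyp a b c) x * hyp (a - c + 1) (b - c + 1) (2 - c) x) =
      (1 - c) * (1 - x) ^ (c - a - b - 1) := by
  simp only [hyp_eq_ordinaryHypergeometric]
  set f : ℝ → ℝ := ₂F₁ a b c
  set g : ℝ → ℝ := ₂F₁ (a - c + 1) (b - c + 1) (2 - c)
  change frobeniusWronskian c f g x = _
  have hW : ∀ y ∈ Metric.ball (0 : ℝ) 1, HasDerivAt (frobeniusWronskian c f g)
      ((a + b + 1 - c) / (1 - y) * frobeniusWronskian c f g y) y := fun y hy ↦ by
    rw [mem_ball_zero_iff] at hy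
    exact hasDerivAt_frobeniusWronskian (lt_of_abs_lt hy).ne
      (isHypergeometricSolutionAt_ordinaryHypergeometric a b hc hy)
      (isHypergeometricSolutionAt_ordinaryHypergeometric _ _ hc' hy)
  have hconst := mul_one_sub_rpow_eq_of_hasDerivAt Metric.isOpen_ball
    (convex_ball (0 : ℝ) 1).isPreconnected (fun y hy ↦ lt_of_abs_lt (mem_ball_zero_iff.mp hy))
    hW (mem_ball_zero_iff.mpr hx) (Metric.mem_ball_self one_pos)
  have hzero : frobeniusWronskian c f g 0 = 1 - c := by
    simp [frobeniusWronskian_zero, f, g]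
  have hx₁ : 0 < 1 - x := sub_pos.mpr (lt_of_abs_lt hx)
  rw [hzero, sub_zero, Real.one_rpow, mul_one] at hconst
  rw [← hconst, mul_assoc, ← Real.rpow_add hx₁,
    show a + b + 1 - c + (c - a - b - 1) = 0 by ring, Real.rpow_zero, mul_one]

theorem hypergeometric_wronskian (J : ℝ) (h0 : 0 < J) (h1 : J < 1) :
    hyp (1/12) (1/12) (2/3) J * hyp (5/12) (5/12) (4/3) J
      + 3 * J * (hyp (1/12) (1/12) (2/3) J * deriv (fun s => hyp (5/12) (5/12) (4/3) s) J
          - deriv (fun s => hyp (1/12) (1/12) (2/3) s) J * hyp (5/12) (5/12) (4/3) J)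
    = (1 - J) ^ (-(1:ℝ)/2) := by
  have hpos : ∀ c : ℝ, 0 < c → ∀ n : ℕ, c ≠ -n := fun c hc n ↦
    ((neg_nonpos.mpr n.cast_nonneg).trans_lt hc).ne'
  have h := hypergeometric_wronskian_general (1/12) (1/12) (c := 2/3)
    (hpos _ (by norm_num)) (hpos _ (by norm_num)) (abs_lt.mpr ⟨by linarith, h1⟩)
  norm_num at h ⊢
  linarith
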